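/- Uniqueness of the Lyapunov solution: let A be a real n×n Hurwitz matrix and Q a real n×n matrix. If P₁ and P₂ are real n×n matrices with P₁A + AᵀP₁ + Q = 0 and P₂A + AᵀP₂ + Q = 0, then P₁ = P₂. -/

import Mathlib

open Matrix

lemma semiconj_aeval {n : ℕ} {X B C : Matrix (Fin n) (Fin n) ℂ} (h : X * B = C * X)
    (p : Polynomial ℂ) : X * Polynomial.aeval B p = Polynomial.aeval C p * X := by
  induction p using Polynomial.induction_on' with
  | add p q hp hq => simp [mul_add, add_mul, hp, hq]
  | monomial k a =>
    have hk : X * B ^ k = C ^ k * X := SemiconjBy.pow_right (show SemiconjBy X B C from h) k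
    simp [Polynomial.aeval_monomial, Algebra.algebraMap_eq_smul_one, hk]

lemma sylvester_zero {n : ℕ} {X B : Matrix (Fin n) (Fin n) ℂ}
    (hB : ∀ μ ∈ spectrum ℂ B, μ.re < 0) (h : X * B + Bᵀ * X = 0) : X = 0 := by
  rcases Nat.eq_zero_or_pos n with rfl | hn
  · exact Subsingleton.elim _ _
  haveI : Nonempty (Fin n) := ⟨⟨0, hn⟩⟩
  have h' : X * B = (-Bᵀ) * X := by
    rw [neg_mul]; exact eq_neg_of_add_eq_zero_left h
  have h2 := semiconj_aeval h' B.charpoly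
  rw [Matrix.aeval_self_charpoly, mul_zero] at h2
  have hu : IsUnit (Polynomial.aeval (-Bᵀ) B.charpoly) := by
    rw [← spectrum.zero_notMem_iff ℂ]
    intro h0
    rw [spectrum.map_polynomial_aeval_of_degree_pos] at h0
    · obtain ⟨μ, hμ, hr⟩ := h0
      have h3 := hB μ (Matrix.mem_spectrum_of_isRoot_charpoly hr)
      rw [← spectrum.neg_eq, Set.mem_neg] at hμ
      have h4 := Matrix.mem_spectrum_iff_isRoot_charpoly.1 hμ
      rw [Matrix.charpoly_transpose] at h4
      have h5 := hB _ (Matrix.mem_spectrum_of_isRoot_charpoly h4)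
      simp at h5
      linarith
    · rw [Matrix.charpoly_degree_eq_dim]; simpa using hn
  exact (hu.mul_right_eq_zero).1 h2.symm

/-- Uniqueness of the Lyapunov solution: if `A` is Hurwitz (all complex eigenvalues have
strictly negative real part) and both `P₁` and `P₂` solve `P A + Aᵀ P + Q = 0`,
then `P₁ = P₂`. -/
theorem lyapunov_solution_unique (n : ℕ) (A Q P₁ P₂ : Matrix (Fin n) (Fin n) ℝ)
    (hA : ∀ μ ∈ spectrum ℂ (A.map (Complex.ofReal ·)), μ.re < 0)
    (h₁ : P₁ * A + Aᵀ * P₁ + Q = 0) (h₂ : P₂ * A + Aᵀ * P₂ + Q = 0) :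
    P₁ = P₂ := by
  have hX : (P₁ - P₂) * A + Aᵀ * (P₁ - P₂) = 0 := by
    have h : (P₁ * A + Aᵀ * P₁ + Q) - (P₂ * A + Aᵀ * P₂ + Q) = 0 := by rw [h₁, h₂, sub_zero]
    rw [← h]; noncomm_ring
  have hC := congrArg (fun M => Complex.ofRealHom.mapMatrix M) hX
  simp only [map_add, map_mul, map_zero] at hC
  have h0 := sylvester_zero (X := Complex.ofRealHom.mapMatrix (P₁ - P₂)) hA hC
  ext i j
  have hij := congrFun (congrFun h0 i) j
  simp only [RingHom.mapMatrix_apply, Matrix.map_apply, Matrix.sub_apply, Matrix.zero_apply,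
    Complex.ofRealHom_eq_coe] at hij
  exact sub_eq_zero.1 (Complex.ofReal_eq_zero.1 hij)
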